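/- Let 4 ≤ p < q, n = p + q, and suppose 2p > q + 4. Then B_{p,q}^{2,0} ≺_s D_{p,q}^{0,1} ≺_s B_{p,q}^{0,1} ≺_s B_{p,q}^{0,0}, and every tree T ∈ 𝒯_n^{p,q} isomorphic to none of these four trees satisfies T ≺_s B_{p,q}^{2,0}; that is, the last four trees in the S-order among 𝒯_n^{p,q} are B_{p,q}^{2,0}, D_{p,q}^{0,1}, B_{p,q}^{0,1}, B_{p,q}^{0,0}. -/

import Mathlib

open SimpleGraph

open scoped Classical in
/-- The adjacency matrix of a simple graph, with real entries. -/
noncomputable def adjMat {V : Type*} [Fintype V] (G : SimpleGraph V) : Matrix V V ℝ :=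
  Matrix.of fun a b => if G.Adj a b then 1 else 0

/-- The `k`-th spectral moment `S_k(G) = tr(A(G)^k)`. -/
noncomputable def spectralMoment {V : Type*} [Fintype V] [DecidableEq V]
    (G : SimpleGraph V) (k : ℕ) : ℝ :=
  Matrix.trace (adjMat G ^ k)

/-- `SLt G₁ G₂` means `G₁ ≺_s G₂`: for some `k` with `1 ≤ k ≤ n - 1`,
`S_i(G₁) = S_i(G₂)` for all `i < k` and `S_k(G₁) < S_k(G₂)`. -/
def SLt {V : Type*} [Fintype V] [DecidableEq V] (G₁ G₂ : SimpleGraph V) : Prop :=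
  ∃ k : ℕ, 1 ≤ k ∧ k ≤ Fintype.card V - 1 ∧
    (∀ i < k, spectralMoment G₁ i = spectralMoment G₂ i) ∧
    spectralMoment G₁ k < spectralMoment G₂ k

/-- The tree `B_{p,q}^{k,l}` on `p + q` vertices: vertex `0 = u` is adjacent to `1 = v`
and to the `q - 1` vertices `2, …, q`; the distinguished neighbor `2` of `u` carries the
`k` pendant leaves `q+1, …, q+k`; the `l` neighbors `3, …, l+2` of `u` carry one pendant
leaf each (`q+k+j` is attached to `j+2` for `1 ≤ j ≤ l`); and `v` carries the
`p - k - l - 1` pendant leaves `q+k+l+1, …, p+q-1`. -/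
def BTree (p q k l : ℕ) : SimpleGraph (Fin (p + q)) :=
  SimpleGraph.fromRel (fun a b =>
    (a.val = 0 ∧ b.val = 1) ∨
    (a.val = 0 ∧ 2 ≤ b.val ∧ b.val ≤ q) ∨
    (a.val = 2 ∧ q + 1 ≤ b.val ∧ b.val ≤ q + k) ∨
    (q + k + 1 ≤ b.val ∧ b.val ≤ q + k + l ∧ a.val = b.val - (q + k) + 2) ∨
    (a.val = 1 ∧ q + k + l + 1 ≤ b.val))

/-- The tree `D_{p,q}^{k,l}` on `p + q` vertices: vertex `1 = v` is adjacent to `0 = u`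
and to the `p - 1` vertices `2, …, p`; the distinguished neighbor `2` of `v` carries the
`k` pendant leaves `p+1, …, p+k`; the `l` neighbors `3, …, l+2` of `v` carry one pendant
leaf each; and `u` carries the `q - k - l - 1` pendant leaves `p+k+l+1, …, p+q-1`. -/
def DTree (p q k l : ℕ) : SimpleGraph (Fin (p + q)) :=
  SimpleGraph.fromRel (fun a b =>
    (a.val = 0 ∧ b.val = 1) ∨
    (a.val = 1 ∧ 2 ≤ b.val ∧ b.val ≤ p) ∨
    (a.val = 2 ∧ p + 1 ≤ b.val ∧ b.val ≤ p + k) ∨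
    (p + k + 1 ≤ b.val ∧ b.val ≤ p + k + l ∧ a.val = b.val - (p + k) + 2) ∨
    (a.val = 0 ∧ p + k + l + 1 ≤ b.val))

/-- `T ∈ 𝒯_{p+q}^{p,q}`: `T` is a tree on `p + q` vertices with a `(p,q)`-bipartition. -/
def TreeBip (p q : ℕ) (G : SimpleGraph (Fin (p + q))) : Prop :=
  G.IsTree ∧ ∃ A : Finset (Fin (p + q)), A.card = p ∧
    ∀ ⦃x y : Fin (p + q)⦄, G.Adj x y → (x ∈ A ↔ y ∉ A)


/-!
For trees of order at least five, `S_0, …, S_3` depend only on the order, and `S_4` is an increasing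
affine function of `E = ∑ (d(v) - 1) ^ 2`, so it suffices to compare the values of `E`.

The excesses `d(v) - 1` over one colour class add up to the size of the other class minus one. If no
vertex is a hub, that is, adjacent to the whole opposite class, then no class can concentrate its
excess in a single vertex and `E` is small. If `u` is a hub, the excess of the class opposite to `u`
either sits at two neighbours `x`, `y` of `u`, and then the tree is a caterpillar with spine
`x, u, y`, or it is so spread out that `E` is smaller than for `B_{p,q}^{2,0}`. The four trees of
the theorem are the only caterpillars surviving this comparison; `2p > q + 4` places `D_{p,q}^{0,1}`
above `B_{p,q}^{2,0}`.
-/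

section SumsOfSquares

variable {ι : Type*} {S : Finset ι} {e : ι → ℕ} {a k : ℕ}

theorem sum_sq_le_mul_sum (he : ∀ i ∈ S, e i ≤ a) : ∑ i ∈ S, e i ^ 2 ≤ a * ∑ i ∈ S, e i := by
  rw [Finset.mul_sum]
  exact Finset.sum_le_sum fun i hi => by rw [pow_two]; exact Nat.mul_le_mul_right _ (he i hi)

theorem sum_sq_le_sq_sum : ∑ i ∈ S, e i ^ 2 ≤ (∑ i ∈ S, e i) ^ 2 := by
  rw [pow_two (∑ i ∈ S, e i)]
  exact sum_sq_le_mul_sum fun i hi => Finset.single_le_sum (fun _ _ => Nat.zero_le _) hi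

theorem sum_sq_lt_of_forall_lt (ha : 0 < a) (hsum : ∑ i ∈ S, e i = a + k)
    (hlt : ∀ i ∈ S, e i < a) : ∑ i ∈ S, e i ^ 2 < a ^ 2 + k ^ 2 := by
  classical
  have hS : S.Nonempty := Finset.nonempty_of_sum_ne_zero (f := e) (by omega)
  obtain ⟨x, hx, hmax⟩ := S.exists_max_image e hS
  have hxa := hlt x hx
  rcases le_or_gt (e x) k with hxk | hxk
  · calc ∑ i ∈ S, e i ^ 2 ≤ e x * (a + k) := hsum ▸ sum_sq_le_mul_sum hmax
      _ < a ^ 2 + k ^ 2 := by nlinarith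
  · have hrest := Finset.add_sum_erase S e hx
    calc ∑ i ∈ S, e i ^ 2 = e x ^ 2 + ∑ i ∈ S.erase x, e i ^ 2 :=
          (Finset.add_sum_erase S (fun i => e i ^ 2) hx).symm
      _ ≤ e x ^ 2 + (∑ i ∈ S.erase x, e i) ^ 2 := by gcongr; exact sum_sq_le_sq_sum
      _ < a ^ 2 + k ^ 2 := by nlinarith

theorem sum_sq_le_of_forall_le (hsum : ∑ i ∈ S, e i = a + k) (hle : ∀ i ∈ S, e i ≤ a) :
    ∑ i ∈ S, e i ^ 2 ≤ a ^ 2 + k ^ 2 := by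
  classical
  by_cases h : ∃ x ∈ S, e x = a
  · obtain ⟨x, hx, rfl⟩ := h
    have hrest : ∑ i ∈ S.erase x, e i = k := by
      have := Finset.add_sum_erase S e hx
      omega
    rw [← Finset.add_sum_erase _ _ hx, ← hrest]
    gcongr
    exact sum_sq_le_sq_sum
  · rcases Nat.eq_zero_or_pos a with rfl | ha
    · exact (sum_sq_le_mul_sum hle).trans (by simp)
    · exact (sum_sq_lt_of_forall_lt ha hsum fun i hi =>
        (hle i hi).lt_of_ne fun h' => h ⟨i, hi, h'⟩).le

theorem exists_eq_sum_of_sum_le_two (hS : S.Nonempty) (hsum : ∑ i ∈ S, e i ≤ 2) :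
    (∃ y ∈ S, e y = ∑ i ∈ S, e i) ∨ ∑ i ∈ S, e i = 2 ∧ ∑ i ∈ S, e i ^ 2 < 4 := by
  by_contra! hcon
  have hlt : ∀ y ∈ S, e y < ∑ i ∈ S, e i := fun y hy =>
    (Finset.single_le_sum (fun _ _ => Nat.zero_le _) hy).lt_of_ne (hcon.1 y hy)
  have hpos : 0 < ∑ i ∈ S, e i := hS.elim fun y hy => (Nat.zero_le _).trans_lt (hlt y hy)
  have hsq := sum_sq_lt_of_forall_lt (k := 0) hpos rfl hlt
  have hle_sq : ∑ i ∈ S, e i ≤ ∑ i ∈ S, e i ^ 2 :=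
    Finset.sum_le_sum fun i _ => Nat.le_self_pow two_ne_zero _
  grind

theorem sum_sq_lt_or_exists_add_eq (ha : 2 ≤ a) (hS : 1 < S.card) (hsum : ∑ i ∈ S, e i = a + 2) :
    ∑ i ∈ S, e i ^ 2 < a ^ 2 + 2 ^ 2 ∨
      ∃ x ∈ S, ∃ y ∈ S, x ≠ y ∧ e x + e y = a + 2 ∧ e y ≤ 2 := by
  classical
  by_cases hlt : ∀ i ∈ S, e i < a
  · exact .inl (sum_sq_lt_of_forall_lt (by omega) hsum hlt)
  push Not at hlt
  obtain ⟨x, hx, hax⟩ := hlt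
  have hrest := hsum ▸ Finset.add_sum_erase S e hx
  have hS' : (S.erase x).Nonempty := (Finset.one_lt_card_iff_nontrivial.mp hS).erase_nonempty
  rcases exists_eq_sum_of_sum_le_two hS' (e := e) (by omega) with ⟨y, hy, hey⟩ | ⟨htwo, hsq⟩
  · exact .inr ⟨x, hx, y, Finset.mem_of_mem_erase hy, (Finset.ne_of_mem_erase hy).symm,
      by omega, by omega⟩
  · obtain rfl : e x = a := by omega
    rw [← Finset.add_sum_erase _ _ hx]
    omega

end SumsOfSquares

section DegreeSums

variable {V : Type*} [Fintype V] {G : SimpleGraph V} [DecidableRel G.Adj] {A B : Finset V}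

theorem isTree_iff_connected_and_sum_degree :
    G.IsTree ↔ G.Connected ∧ ∑ v, G.degree v + 2 = 2 * Fintype.card V := by
  rw [isTree_iff_connected_and_card, Nat.card_eq_fintype_card, Nat.card_eq_fintype_card,
    ← edgeFinset_card, sum_degrees_eq_twice_card_edges]
  exact and_congr_right fun _ => by omega

theorem degree_pos_of_isTree [Nontrivial V] (hG : G.IsTree) (v : V) : 0 < G.degree v :=
  hG.connected.preconnected.degree_pos_of_nontrivial v

theorem sum_degree_sub_one_add_card [Nontrivial V] (hG : G.IsTree) (S : Finset V) :
    ∑ v ∈ S, (G.degree v - 1) + S.card = ∑ v ∈ S, G.degree v := by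
  rw [Finset.card_eq_sum_ones, ← Finset.sum_add_distrib]
  exact Finset.sum_congr rfl fun v _ => Nat.sub_add_cancel (degree_pos_of_isTree hG v)

theorem sum_degree_sub_one [Nontrivial V] (hG : G.IsTree) :
    ∑ v, (G.degree v - 1) + 2 = Fintype.card V := by
  have h := sum_degree_sub_one_add_card hG Finset.univ
  have h' := (isTree_iff_connected_and_sum_degree.mp hG).2
  rw [Finset.card_univ] at h
  omega

theorem degree_eq_one_of_sum_degree_sub_one [Nontrivial V] (hG : G.IsTree) {S : Finset V}
    (hS : ∑ v ∈ S, (G.degree v - 1) + 2 = Fintype.card V) {v : V} (hv : v ∉ S) :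
    G.degree v = 1 := by
  classical
  have hle := Finset.sum_le_univ_sum_of_nonneg (f := fun v => G.degree v - 1)
    (s := insert v S) fun _ => Nat.zero_le _
  have hsum := sum_degree_sub_one hG
  have hpos := degree_pos_of_isTree hG v
  rw [Finset.sum_insert hv] at hle
  omega

omit [DecidableRel G.Adj] in
theorem isCompl_of_isTree [Nontrivial V] (hG : G.IsTree) (hAB : G.IsBipartiteWith A B) :
    IsCompl A B := by
  classical
  refine ⟨Finset.disjoint_coe.mp hAB.disjoint, codisjoint_iff_le_sup.mpr fun v _ => ?_⟩
  obtain ⟨w, hvw⟩ := (G.degree_pos_iff_exists_adj v).mp (degree_pos_of_isTree hG v)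
  exact Finset.mem_union.mpr ((hAB.mem_of_adj hvw).imp And.left And.left)

omit [DecidableRel G.Adj] in
theorem card_add_card_of_isTree [Nontrivial V] (hG : G.IsTree) (hAB : G.IsBipartiteWith A B) :
    A.card + B.card = Fintype.card V := by
  classical
  rw [← (isCompl_of_isTree hG hAB).compl_eq, Finset.card_add_card_compl]

omit [DecidableRel G.Adj] in
theorem sum_add_sum_of_isTree [Nontrivial V] (hG : G.IsTree) (hAB : G.IsBipartiteWith A B)
    (f : V → ℕ) : ∑ v ∈ A, f v + ∑ v ∈ B, f v = ∑ v, f v := by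
  classical
  rw [← (isCompl_of_isTree hG hAB).compl_eq, Finset.sum_add_sum_compl]

theorem sum_degree_sub_one_of_isBipartiteWith [Nontrivial V] (hG : G.IsTree)
    (hAB : G.IsBipartiteWith A B) : ∑ v ∈ A, (G.degree v - 1) + 1 = B.card := by
  have hsum := sum_degree_sub_one_add_card hG A
  have hedges := hG.card_edgeFinset
  have hcard := card_add_card_of_isTree hG hAB
  rw [isBipartiteWith_sum_degrees_eq_card_edges hAB] at hsum
  omega

end DegreeSums

section SpectralMoments

open scoped Matrix

variable {V : Type*} [Fintype V] {G G₁ G₂ : SimpleGraph V} [DecidableRel G.Adj]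
  [DecidableRel G₁.Adj] [DecidableRel G₂.Adj]

theorem adjMat_eq_adjMatrix : adjMat G = G.adjMatrix ℝ := by
  ext v w
  simp [adjMat, adjMatrix_apply]

variable [DecidableEq V]

theorem sum_adjMatrix_sq :
    ∑ v, ∑ w, (G.adjMatrix ℝ ^ 2) v w = ∑ v, (G.degree v : ℝ) ^ 2 := by
  have hmulVec : G.adjMatrix ℝ *ᵥ 1 = fun v => (G.degree v : ℝ) := by
    ext v
    simp [Matrix.mulVec, dotProduct, adjMatrix_apply, ← neighborFinset_eq_filter]
  have hvecMul : 1 ᵥ* G.adjMatrix ℝ = fun v => (G.degree v : ℝ) := by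
    rw [← Matrix.mulVec_transpose, transpose_adjMatrix, hmulVec]
  calc ∑ v, ∑ w, (G.adjMatrix ℝ ^ 2) v w = 1 ⬝ᵥ (G.adjMatrix ℝ ^ 2) *ᵥ 1 := by
        simp [dotProduct, Matrix.mulVec]
    _ = (1 ᵥ* G.adjMatrix ℝ) ⬝ᵥ (G.adjMatrix ℝ *ᵥ 1) := by
        rw [pow_two, ← Matrix.mulVec_mulVec, Matrix.dotProduct_mulVec]
    _ = ∑ v, (G.degree v : ℝ) ^ 2 := by
        rw [hmulVec, hvecMul]
        simp only [dotProduct, pow_two]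

omit [Fintype V] [DecidableRel G.Adj] [DecidableEq V] in
theorem subsingleton_walk_length_two_of_isAcyclic (hG : G.IsAcyclic) {v w : V} (hvw : v ≠ w) :
    Subsingleton {p : G.Walk v w | p.length = 2} := by
  have hpath : ∀ p : G.Walk v w, p.length = 2 → p.IsPath
    | .cons h (.cons h' .nil), _ => by simp [h.ne, h'.ne, hvw]
  refine ⟨fun p p' => Subtype.ext ?_⟩
  exact congrArg (fun r : G.Path v w => (r : G.Walk v w))
    ((hG.subsingleton_path v w).elim ⟨p, hpath p p.2⟩ ⟨p', hpath p' p'.2⟩)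

theorem adjMatrix_sq_apply_sq_of_isAcyclic (hG : G.IsAcyclic) {v w : V}
    (hvw : v ≠ w) : (G.adjMatrix ℝ ^ 2) v w ^ 2 = (G.adjMatrix ℝ ^ 2) v w := by
  have := subsingleton_walk_length_two_of_isAcyclic hG hvw
  have hle := Fintype.card_le_one_iff_subsingleton.mpr this
  rw [adjMatrix_pow_apply_eq_card_walk]
  interval_cases Fintype.card {p : G.Walk v w | p.length = 2} <;> simp

omit [DecidableRel G.Adj] in
theorem spectralMoment_zero : spectralMoment G 0 = Fintype.card V := by
  simp [spectralMoment]

theorem spectralMoment_two : spectralMoment G 2 = ∑ v, (G.degree v : ℝ) := by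
  rw [spectralMoment, adjMat_eq_adjMatrix, Matrix.trace, pow_two]
  exact Finset.sum_congr rfl fun v _ => adjMatrix_mul_self_apply_self G v

omit [DecidableRel G.Adj] in
theorem spectralMoment_eq_zero_of_odd (hG : G.IsBipartite) {k : ℕ} (hk : Odd k) :
    spectralMoment G k = 0 := by
  classical
  have c : G.Coloring Bool := hG.toColoring (by simp)
  rw [spectralMoment, adjMat_eq_adjMatrix, Matrix.trace]
  refine Finset.sum_eq_zero fun v _ => ?_
  have : IsEmpty {p : G.Walk v v | p.length = k} :=
    ⟨fun p => Nat.not_even_iff_odd.mpr hk (p.2 ▸ (c.even_length_iff_congr p.1).mpr Iff.rfl)⟩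
  simp [adjMatrix_pow_apply_eq_card_walk]

theorem adjMatrix_pow_four_apply_self_of_isAcyclic (hG : G.IsAcyclic) (v : V) :
    (G.adjMatrix ℝ ^ 4) v v =
      ∑ w, (G.adjMatrix ℝ ^ 2) v w + ((G.degree v : ℝ) ^ 2 - G.degree v) := by
  have hdiag : (G.adjMatrix ℝ ^ 2) v v = G.degree v := by
    rw [pow_two, adjMatrix_mul_self_apply_self]
  have hsymm : (G.adjMatrix ℝ ^ 2).IsSymm := (isSymm_adjMatrix G).pow 2
  calc (G.adjMatrix ℝ ^ 4) v v = ∑ w, (G.adjMatrix ℝ ^ 2) v w ^ 2 := by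
        rw [show 4 = 2 + 2 from rfl, pow_add, Matrix.mul_apply]
        exact Finset.sum_congr rfl fun w _ => by rw [hsymm.apply v w, ← pow_two (_ : ℝ)]
    _ = (G.adjMatrix ℝ ^ 2) v v ^ 2 + ∑ w ∈ Finset.univ.erase v, (G.adjMatrix ℝ ^ 2) v w := by
        rw [← Finset.add_sum_erase _ _ (Finset.mem_univ v)]
        congr 1
        exact Finset.sum_congr rfl fun w hw =>
          adjMatrix_sq_apply_sq_of_isAcyclic hG (Finset.ne_of_mem_erase hw).symm
    _ = ∑ w, (G.adjMatrix ℝ ^ 2) v w + ((G.degree v : ℝ) ^ 2 - G.degree v) := by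
        rw [← Finset.add_sum_erase _ _ (Finset.mem_univ v), hdiag]
        ring

theorem spectralMoment_four_of_isAcyclic (hG : G.IsAcyclic) :
    spectralMoment G 4 = 2 * ∑ v, (G.degree v : ℝ) ^ 2 - ∑ v, (G.degree v : ℝ) := by
  rw [spectralMoment, adjMat_eq_adjMatrix, Matrix.trace]
  simp only [Matrix.diag_apply, adjMatrix_pow_four_apply_self_of_isAcyclic hG,
    Finset.sum_add_distrib, sum_adjMatrix_sq, Finset.sum_sub_distrib]
  ring

omit [DecidableEq V] in
/-- The degree statistic `∑ (d(v) - 1) ^ 2`. On trees of a fixed order it determines, and grows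
with, the fourth spectral moment; leaves do not contribute to it. -/
def excessSqSum (G : SimpleGraph V) [DecidableRel G.Adj] : ℕ := ∑ v, (G.degree v - 1) ^ 2

theorem spectralMoment_four_of_isTree [Nontrivial V] (hG : G.IsTree) :
    spectralMoment G 4 = 2 * excessSqSum G + 4 * Fintype.card V - 6 := by
  have hsum : (∑ v, (G.degree v : ℝ)) + 2 = 2 * Fintype.card V :=
    mod_cast (isTree_iff_connected_and_sum_degree.mp hG).2
  have hexcess : (excessSqSum G : ℝ) = ∑ v, ((G.degree v : ℝ) - 1) ^ 2 := by
    rw [excessSqSum, Nat.cast_sum]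
    exact Finset.sum_congr rfl fun v _ => by
      rw [Nat.cast_pow, Nat.cast_pred (degree_pos_of_isTree hG v)]
  rw [spectralMoment_four_of_isAcyclic hG.isAcyclic, hexcess]
  simp only [sub_sq, Finset.sum_add_distrib, Finset.sum_sub_distrib, ← Finset.mul_sum,
    one_pow, mul_one, Finset.sum_const, Finset.card_univ, nsmul_eq_mul]
  linarith

theorem sLt_of_excessSqSum_lt (hV : 5 ≤ Fintype.card V) (hG₁ : G₁.IsTree) (hG₂ : G₂.IsTree)
    (hlt : excessSqSum G₁ < excessSqSum G₂) : SLt G₁ G₂ := by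
  have : Nontrivial V := Fintype.one_lt_card_iff_nontrivial.mp (by omega)
  have hsum (G : SimpleGraph V) [DecidableRel G.Adj] (hG : G.IsTree) :
      ∑ v, (G.degree v : ℝ) = 2 * Fintype.card V - 2 := by
    rw [eq_sub_iff_add_eq]
    exact mod_cast (isTree_iff_connected_and_sum_degree.mp hG).2
  refine ⟨4, by norm_num, by omega, fun i hi => ?_, ?_⟩
  · interval_cases i
    · rw [spectralMoment_zero, spectralMoment_zero]
    · rw [spectralMoment_eq_zero_of_odd hG₁.isBipartite odd_one,
        spectralMoment_eq_zero_of_odd hG₂.isBipartite odd_one]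
    · rw [spectralMoment_two, spectralMoment_two, hsum G₁ hG₁, hsum G₂ hG₂]
    · rw [spectralMoment_eq_zero_of_odd hG₁.isBipartite (by decide),
        spectralMoment_eq_zero_of_odd hG₂.isBipartite (by decide)]
  · rw [spectralMoment_four_of_isTree hG₁, spectralMoment_four_of_isTree hG₂]
    gcongr

end SpectralMoments

section AttachLeaves

variable {V κ : Type*} {G : SimpleGraph V} {H : SimpleGraph κ} {w : κ → ℕ}

/-- The graph obtained from `H` by attaching `w i` pendant leaves to each vertex `i`; the leaves at
`i` are indexed by `Fin (w i)`. -/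
def attachLeaves (H : SimpleGraph κ) (w : κ → ℕ) : SimpleGraph (κ ⊕ Σ i, Fin (w i)) where
  Adj
    | .inl i, .inl j => H.Adj i j
    | .inl i, .inr l => l.1 = i
    | .inr l, .inl i => l.1 = i
    | .inr _, .inr _ => False
  symm := ⟨by rintro (i | l) (j | l') h <;> first | exact h | exact h.symm⟩
  loopless := ⟨by rintro (i | l) h; exacts [h.ne rfl, h]⟩

@[simp]
theorem attachLeaves_adj_inl_inl {i j : κ} :
    (attachLeaves H w).Adj (.inl i) (.inl j) ↔ H.Adj i j := Iff.rfl

@[simp]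
theorem attachLeaves_adj_inl_inr {i : κ} {l : Σ i, Fin (w i)} :
    (attachLeaves H w).Adj (.inl i) (.inr l) ↔ l.1 = i := Iff.rfl

@[simp]
theorem attachLeaves_adj_inr_inl {i : κ} {l : Σ i, Fin (w i)} :
    (attachLeaves H w).Adj (.inr l) (.inl i) ↔ l.1 = i := Iff.rfl

@[simp]
theorem not_attachLeaves_adj_inr_inr {l l' : Σ i, Fin (w i)} :
    ¬ (attachLeaves H w).Adj (.inr l) (.inr l') := id

instance [DecidableEq κ] [DecidableRel H.Adj] : DecidableRel (attachLeaves H w).Adj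
  | .inl i, .inl j => inferInstanceAs (Decidable (H.Adj i j))
  | .inl i, .inr l => inferInstanceAs (Decidable (l.1 = i))
  | .inr l, .inl i => inferInstanceAs (Decidable (l.1 = i))
  | .inr _, .inr _ => inferInstanceAs (Decidable False)

theorem attachLeaves_connected (hH : H.Connected) : (attachLeaves H w).Connected := by
  let φ : H →g attachLeaves H w := ⟨.inl, id⟩
  have := hH.nonempty
  rw [connected_iff_exists_forall_reachable]
  refine ⟨.inl (Classical.arbitrary κ), ?_⟩
  have hspine (i : κ) := (hH.preconnected (Classical.arbitrary κ) i).map φ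
  rintro (i | l)
  · exact hspine i
  · exact (hspine l.1).trans (Adj.reachable (G := attachLeaves H w) (u := .inl l.1) rfl)

variable [Fintype κ] [DecidableEq κ] [DecidableRel H.Adj]

@[simp]
theorem attachLeaves_degree_inl (i : κ) :
    (attachLeaves H w).degree (.inl i) = H.degree i + w i := by
  rw [← card_neighborFinset_eq_degree, ← card_neighborFinset_eq_degree, neighborFinset_eq_filter,
    neighborFinset_eq_filter, Finset.card_filter, Finset.card_filter, Fintype.sum_sum_type,
    Fintype.sum_sigma]
  simp

@[simp]
theorem attachLeaves_degree_inr (l : Σ i, Fin (w i)) :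
    (attachLeaves H w).degree (.inr l) = 1 := by
  rw [← card_neighborFinset_eq_degree, neighborFinset_eq_filter, Finset.card_filter,
    Fintype.sum_sum_type]
  simp

omit [Fintype κ] [DecidableEq κ] [DecidableRel H.Adj] in
theorem attachLeaves_isTree [Finite κ] (hH : H.IsTree) : (attachLeaves H w).IsTree := by
  classical
  have := Fintype.ofFinite κ
  have hsum := (isTree_iff_connected_and_sum_degree.mp hH).2
  refine isTree_iff_connected_and_sum_degree.mpr ⟨attachLeaves_connected hH.connected, ?_⟩
  simp only [Fintype.sum_sum_type, attachLeaves_degree_inl, attachLeaves_degree_inr,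
    Finset.sum_add_distrib, Finset.sum_const, Finset.card_univ, Fintype.card_sum,
    Fintype.card_sigma, Fintype.card_fin, smul_eq_mul]
  omega

theorem excessSqSum_attachLeaves :
    excessSqSum (attachLeaves H w) = ∑ i, (H.degree i + w i - 1) ^ 2 := by
  simp [excessSqSum, Fintype.sum_sum_type]

variable [Fintype V] [DecidableRel G.Adj] {f : H ↪g G}

omit [DecidableEq κ] in
theorem natCard_adj_compl_range {i : κ} (hdeg : G.degree (f i) = H.degree i + w i) :
    Nat.card {v : ↥(Set.range f)ᶜ // G.Adj (f i) v} = w i := by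
  classical
  have hspine : {v ∈ G.neighborFinset (f i) | v ∈ Set.range f} =
      (H.neighborFinset i).map f.toEmbedding := by
    ext v
    simp only [Finset.mem_filter, mem_neighborFinset, Finset.mem_map, Set.mem_range]
    constructor
    · rintro ⟨h, j, rfl⟩
      exact ⟨j, f.map_adj_iff.mp h, rfl⟩
    · rintro ⟨j, h, rfl⟩
      exact ⟨f.map_adj_iff.mpr h, j, rfl⟩
  have hcard := Finset.card_filter_add_card_filter_not (s := G.neighborFinset (f i))
    (· ∈ Set.range f)
  rw [hspine, Finset.card_map, card_neighborFinset_eq_degree, card_neighborFinset_eq_degree,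
    hdeg, Nat.add_left_cancel_iff] at hcard
  rw [← hcard, Nat.card_congr (Equiv.subtypeSubtypeEquivSubtypeInter (· ∈ (Set.range f)ᶜ)
    (G.Adj (f i))), Nat.card_eq_fintype_card, Fintype.card_subtype]
  congr 1
  ext v
  simp [and_comm]

omit [DecidableEq κ] in
theorem nonempty_iso_attachLeaves (hleaf : ∀ v ∉ Set.range f, ∃ i, ∀ z, G.Adj v z ↔ z = f i)
    (hdeg : ∀ i, G.degree (f i) = H.degree i + w i) : Nonempty (G ≃g attachLeaves H w) := by
  classical
  choose spine hspine using fun v : ↥(Set.range f)ᶜ => hleaf v v.2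
  have e (i : κ) : Fin (w i) ≃ {v // spine v = i} := by
    refine (Fintype.equivFinOfCardEq ?_).symm
    simp only [← natCard_adj_compl_range (hdeg i), Nat.card_eq_fintype_card, G.adj_comm (f i),
      hspine, f.injective.eq_iff, eq_comm]
  let φ : κ ⊕ (Σ i, Fin (w i)) ≃ V :=
    ((Equiv.ofInjective f f.injective).sumCongr
      ((Equiv.sigmaCongrRight e).trans (Equiv.sigmaFiberEquiv spine))).trans
      (Equiv.Set.sumCompl (Set.range f))
  have hinl (i : κ) : φ (.inl i) = f i := rfl
  have hinr (l : Σ i, Fin (w i)) (z : V) : G.Adj (φ (.inr l)) z ↔ z = f l.1 :=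
    (hspine (e l.1 l.2).1 z).trans (by rw [(e l.1 l.2).2])
  refine ⟨Iso.symm ⟨φ, ?_⟩⟩
  rintro (i | l) (j | l')
  · exact f.map_adj_iff
  · rw [G.adj_comm, hinr, hinl, f.injective.eq_iff, attachLeaves_adj_inl_inr, eq_comm]
  · rw [hinr, hinl, f.injective.eq_iff, attachLeaves_adj_inr_inl, eq_comm]
  · rw [hinr, ← hinl, φ.injective.eq_iff]
    simp

end AttachLeaves

section Caterpillar

variable {V : Type*} {G G₁ G₂ : SimpleGraph V} {x u y : V}

instance decidableRel_pathGraph_adj {n : ℕ} : DecidableRel (pathGraph n).Adj :=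
  fun _ _ => decidable_of_iff' _ pathGraph_adj

theorem pathGraph_three_isTree : (pathGraph 3).IsTree :=
  isTree_iff_connected_and_sum_degree.mpr ⟨pathGraph_connected 2, by decide⟩

/-- The caterpillar whose spine is a path on three vertices, carrying `a`, `s` and `b` pendant
leaves in this order. -/
abbrev caterpillar (a s b : ℕ) : SimpleGraph (Fin 3 ⊕ Σ i, Fin (![a, s, b] i)) :=
  attachLeaves (pathGraph 3) ![a, s, b]

theorem caterpillar_isTree (a s b : ℕ) : (caterpillar a s b).IsTree :=
  attachLeaves_isTree pathGraph_three_isTree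

theorem pathGraph_three_degree (i : Fin 3) : (pathGraph 3).degree i = ![1, 2, 1] i := by
  revert i
  decide

theorem excessSqSum_caterpillar (a s b : ℕ) :
    excessSqSum (caterpillar a s b) = (s + 1) ^ 2 + a ^ 2 + b ^ 2 := by
  simp only [excessSqSum_attachLeaves, Fin.sum_univ_three, pathGraph_three_degree, Matrix.cons_val,
    Nat.add_sub_cancel_left]
  rw [show 2 + s - 1 = s + 1 by omega]
  ring

theorem exists_adj_iff_eq_of_connected [Fintype V] [DecidableRel G.Adj] {S : Set V}
    (hG : G.Connected) (hS : S.Nonempty) (hdeg : ∀ v ∉ S, G.degree v = 1) {v : V} (hv : v ∉ S) :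
    ∃ z ∈ S, ∀ z', G.Adj v z' ↔ z' = z := by
  obtain ⟨z, hvz, huniq⟩ := degree_eq_one_iff_existsUnique_adj.mp (hdeg v hv)
  refine ⟨z, ?_, fun z' => ⟨huniq z', fun h => h ▸ hvz⟩⟩
  -- Otherwise `{v, z}` is a component of `G`.
  by_contra hz
  obtain ⟨v', hvz', huniq'⟩ := degree_eq_one_iff_existsUnique_adj.mp (hdeg z hz)
  obtain rfl := huniq' v hvz.symm
  obtain ⟨s, hs⟩ := hS
  obtain ⟨p⟩ := hG.preconnected v s
  obtain ⟨d, -, hfst, hsnd⟩ := p.exists_boundary_dart {v, z} (by simp) (by grind)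
  have := d.adj
  grind

variable [Fintype V] [DecidableRel G.Adj]

omit [Fintype V] [DecidableRel G.Adj] in
theorem exists_pathGraph_three_embedding (hux : G.Adj u x) (huy : G.Adj u y) (hxy : x ≠ y)
    (hxy' : ¬ G.Adj x y) : ∃ f : pathGraph 3 ↪g G, ⇑f = ![x, u, y] := by
  have hinj : Function.Injective ![x, u, y] := fun i j hij => by
    fin_cases i <;> fin_cases j
    all_goals simp_all [hux.ne, hux.ne', huy.ne, huy.ne', hxy.symm]
  have hadj (i j : Fin 3) : G.Adj (![x, u, y] i) (![x, u, y] j) ↔ (pathGraph 3).Adj i j := by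
    fin_cases i <;> fin_cases j
    all_goals simp [pathGraph_adj, hux, huy, hux.symm, huy.symm, hxy', G.adj_comm y x]
  exact ⟨⟨⟨_, hinj⟩, hadj _ _⟩, rfl⟩

theorem nonempty_iso_caterpillar_of_isTree (hG : G.IsTree) (hux : G.Adj u x) (huy : G.Adj u y)
    (hxy : x ≠ y) (hdeg : G.degree x + G.degree u + G.degree y = Fintype.card V + 1) :
    Nonempty (G ≃g caterpillar (G.degree x - 1) (G.degree u - 2) (G.degree y - 1)) := by
  classical
  have : Nontrivial V := ⟨x, y, hxy⟩
  have hxy' : ¬ G.Adj x y := fun h => hG.isAcyclic.cliqueFree le_rfl {x, u, y}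
    (is3Clique_triple_iff.mpr ⟨hux.symm, h, huy⟩)
  obtain ⟨f, hf⟩ := exists_pathGraph_three_embedding hux huy hxy hxy'
  have hx := degree_pos_of_isTree hG x
  have hy := degree_pos_of_isTree hG y
  have hu : 1 < G.degree u := by
    rw [← card_neighborFinset_eq_degree]
    exact Finset.one_lt_card.mpr ⟨x, by simpa, y, by simpa, hxy⟩
  have hout : ∀ v ∉ Set.range f, G.degree v = 1 := fun v hv => by
    refine degree_eq_one_of_sum_degree_sub_one hG (S := {y, u, x}) ?_ (by simpa [hf] using hv)
    rw [Finset.sum_insert (by simp [huy.ne', hxy.symm]), Finset.sum_pair hux.ne]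
    omega
  refine nonempty_iso_attachLeaves (f := f) (fun v hv => ?_) fun i => ?_
  · obtain ⟨_, ⟨i, rfl⟩, hi⟩ :=
      exists_adj_iff_eq_of_connected hG.connected (Set.range_nonempty f) hout hv
    exact ⟨i, hi⟩
  · rw [hf, pathGraph_three_degree]
    fin_cases i
    exacts [(Nat.add_sub_of_le hx).symm, (Nat.add_sub_of_le hu).symm,
      (Nat.add_sub_of_le hy).symm]

theorem excessSqSum_eq_of_iso {W : Type*} [Fintype W] {G' : SimpleGraph W} [DecidableRel G'.Adj]
    (e : G ≃g G') : excessSqSum G = excessSqSum G' :=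
  Fintype.sum_equiv e.toEquiv _ _ fun v => by
    rw [RelIso.coe_fn_toEquiv, e.degree_eq]

omit [DecidableRel G.Adj] in
theorem sLt_of_iso_caterpillar [DecidableEq V] {a s b a' s' b' : ℕ} (hV : 5 ≤ Fintype.card V)
    (e₁ : G₁ ≃g caterpillar a s b) (e₂ : G₂ ≃g caterpillar a' s' b')
    (hlt : (s + 1) ^ 2 + a ^ 2 + b ^ 2 < (s' + 1) ^ 2 + a' ^ 2 + b' ^ 2) : SLt G₁ G₂ := by
  classical
  refine sLt_of_excessSqSum_lt hV (e₁.isTree_iff.mpr (caterpillar_isTree a s b))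
    (e₂.isTree_iff.mpr (caterpillar_isTree a' s' b')) ?_
  rwa [excessSqSum_eq_of_iso e₁, excessSqSum_eq_of_iso e₂, excessSqSum_caterpillar,
    excessSqSum_caterpillar]

end Caterpillar

section BTreeDTree

variable {p q k l : ℕ}

theorem degree_eq_card_of_forall_adj_iff {N : ℕ} {G : SimpleGraph (Fin N)} [DecidableRel G.Adj]
    {a : Fin N} {s : Finset ℕ} (hs : ∀ j ∈ s, j < N) (hadj : ∀ b, G.Adj a b ↔ b.val ∈ s) :
    G.degree a = s.card := by
  rw [← card_neighborFinset_eq_degree, ← Finset.card_attachFin s hs]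
  congr 1
  ext b
  rw [mem_neighborFinset, hadj, Finset.mem_attachFin]

variable {a : Fin (p + q)} [DecidableRel (BTree p q k 0).Adj]

theorem BTree_degree_of_val_eq_zero (hp : 1 ≤ p) (hq : 1 ≤ q) (ha : a.val = 0) :
    (BTree p q k 0).degree a = q := by
  refine (degree_eq_card_of_forall_adj_iff (s := Finset.Icc 1 q) (fun j hj => ?_)
    fun b => ?_).trans (by simp)
  · have := Finset.mem_Icc.mp hj
    omega
  · simp only [BTree, fromRel_adj, Fin.ext_iff, ne_eq, Finset.mem_Icc]
    omega

theorem BTree_degree_of_val_eq_one (hq : 1 ≤ q) (hk : k < p) (ha : a.val = 1) :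
    (BTree p q k 0).degree a = p - k := by
  refine (degree_eq_card_of_forall_adj_iff (s := insert 0 (Finset.Ico (q + k + 1) (p + q)))
    (fun j hj => ?_) fun b => ?_).trans ?_
  · have := Finset.mem_insert.mp hj
    rw [Finset.mem_Ico] at this
    omega
  · simp only [BTree, fromRel_adj, Fin.ext_iff, ne_eq, Finset.mem_insert, Finset.mem_Ico]
    omega
  · rw [Finset.card_insert_of_notMem (by simp), Nat.card_Ico]
    omega

theorem BTree_degree_of_val_eq_two (hq : 2 ≤ q) (hk : k < p) (ha : a.val = 2) :
    (BTree p q k 0).degree a = k + 1 := by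
  refine (degree_eq_card_of_forall_adj_iff (s := insert 0 (Finset.Icc (q + 1) (q + k)))
    (fun j hj => ?_) fun b => ?_).trans ?_
  · have := Finset.mem_insert.mp hj
    rw [Finset.mem_Icc] at this
    omega
  · simp only [BTree, fromRel_adj, Fin.ext_iff, ne_eq, Finset.mem_insert, Finset.mem_Icc]
    omega
  · rw [Finset.card_insert_of_notMem (by simp), Nat.card_Icc]
    omega

omit [DecidableRel (BTree p q k 0).Adj] in
theorem BTree_exists_adj_iff_val_eq (ha : 3 ≤ a.val) :
    ∃ i : Fin 3, ∀ w, (BTree p q k 0).Adj a w ↔ w.val = ![1, 0, 2] i := by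
  rcases le_or_gt a.val q with haq | haq
  · refine ⟨1, fun w => ?_⟩
    simp only [BTree, fromRel_adj, Fin.ext_iff, ne_eq, Matrix.cons_val]
    omega
  rcases le_or_gt a.val (q + k) with hak | hak
  · refine ⟨2, fun w => ?_⟩
    simp only [BTree, fromRel_adj, Fin.ext_iff, ne_eq, Matrix.cons_val]
    omega
  · refine ⟨0, fun w => ?_⟩
    simp only [BTree, fromRel_adj, Fin.ext_iff, ne_eq, Matrix.cons_val]
    omega

omit [DecidableRel (BTree p q k 0).Adj] in
theorem nonempty_iso_BTree_zero_caterpillar (p q k : ℕ) (hq : 2 ≤ q) (hk : k < p) :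
    Nonempty (BTree p q k 0 ≃g caterpillar (p - 1 - k) (q - 2) k) := by
  classical
  obtain ⟨f, hf⟩ := exists_pathGraph_three_embedding (G := BTree p q k 0) (u := ⟨0, by omega⟩)
    (x := ⟨1, by omega⟩) (y := ⟨2, by omega⟩) (by simp [BTree])
    (by simp [BTree, hq]) (by simp) (by simp only [BTree, fromRel_adj]; grind)
  refine nonempty_iso_attachLeaves (f := f) (fun v hv => ?_) fun i => ?_
  · have hv3 : 3 ≤ v.val := by
      simp only [hf, Matrix.range_cons, Matrix.range_empty, Set.union_empty, Set.union_singleton,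
        Set.union_insert, Set.mem_insert_iff, Set.mem_singleton_iff, Fin.ext_iff] at hv
      omega
    obtain ⟨i, hi⟩ := BTree_exists_adj_iff_val_eq (k := k) hv3
    refine ⟨i, fun w => (hi w).trans ?_⟩
    rw [hf, Fin.ext_iff]
    fin_cases i <;> rfl
  · rw [hf, pathGraph_three_degree]
    fin_cases i
    · exact (BTree_degree_of_val_eq_one (by omega) hk rfl).trans
        (show p - k = 1 + (p - 1 - k) by omega)
    · exact (BTree_degree_of_val_eq_zero (by omega) (by omega) rfl).trans
        (show q = 2 + (q - 2) by omega)
    · exact (BTree_degree_of_val_eq_two hq hk rfl).trans (add_comm k 1)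

omit [DecidableRel (BTree p q k 0).Adj]

theorem val_swap_apply {N : ℕ} (i j x : Fin N) :
    x.val = i ∧ (Equiv.swap i j x).val = j ∨ x.val = j ∧ (Equiv.swap i j x).val = i ∨
      x.val ≠ i ∧ x.val ≠ j ∧ (Equiv.swap i j x).val = x := by
  rw [Equiv.swap_apply_def]
  split_ifs <;> omega

theorem nonempty_iso_BTree_zero_one_BTree_one_zero (hp : 1 ≤ p) (hq : 3 ≤ q) :
    Nonempty (BTree p q 0 1 ≃g BTree p q 1 0) := by
  refine ⟨Equiv.swap ⟨2, by omega⟩ ⟨3, by omega⟩, fun {a b} => ?_⟩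
  have ha := val_swap_apply ⟨2, by omega⟩ ⟨3, by omega⟩ a
  have hb := val_swap_apply ⟨2, by omega⟩ ⟨3, by omega⟩ b
  simp only [BTree, fromRel_adj, ne_eq, Fin.ext_iff]
  rcases ha with ha | ha | ha <;> rcases hb with hb | hb | hb <;> grind

theorem nonempty_iso_BTree_zero_one_caterpillar (p q : ℕ) (hp : 2 ≤ p) (hq : 3 ≤ q) :
    Nonempty (BTree p q 0 1 ≃g caterpillar (p - 2) (q - 2) 1) := by
  obtain ⟨e⟩ := nonempty_iso_BTree_zero_one_BTree_one_zero (p := p) (by omega) hq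
  obtain ⟨e'⟩ := nonempty_iso_BTree_zero_caterpillar p q 1 (by omega) hp
  exact ⟨e.trans e'⟩

theorem nonempty_iso_DTree_BTree (hp : 1 ≤ p) (hq : 1 ≤ q) :
    Nonempty (DTree p q k l ≃g BTree q p k l) := by
  refine ⟨(Equiv.swap ⟨0, by omega⟩ ⟨1, by omega⟩).trans (finCongr (add_comm p q)), fun {a b} => ?_⟩
  have ha := val_swap_apply ⟨0, by omega⟩ ⟨1, by omega⟩ a
  have hb := val_swap_apply ⟨0, by omega⟩ ⟨1, by omega⟩ b
  simp only [BTree, DTree, fromRel_adj, ne_eq, Fin.ext_iff, Equiv.trans_apply, finCongr_apply,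
    Fin.val_cast]
  rcases ha with ha | ha | ha <;> rcases hb with hb | hb | hb <;> grind

theorem nonempty_iso_DTree_zero_one_caterpillar (p q : ℕ) (hp : 3 ≤ p) (hq : 2 ≤ q) :
    Nonempty (DTree p q 0 1 ≃g caterpillar (q - 2) (p - 2) 1) := by
  obtain ⟨e⟩ := nonempty_iso_DTree_BTree (p := p) (q := q) (k := 0) (l := 1) (by omega) (by omega)
  obtain ⟨e'⟩ := nonempty_iso_BTree_zero_one_caterpillar q p hq hp
  exact ⟨e.trans e'⟩

end BTreeDTree

section BipartiteTrees

variable {V : Type*} {G : SimpleGraph V}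

theorem isBipartiteWith_compl_of_forall_adj [Fintype V] [DecidableEq V] {A : Finset V}
    (hA : ∀ ⦃x y⦄, G.Adj x y → (x ∈ A ↔ y ∉ A)) : G.IsBipartiteWith A (Aᶜ : Finset V) where
  disjoint := Finset.disjoint_coe.mpr disjoint_compl_right
  mem_of_adj x y hxy := by
    have := hA hxy
    simp only [Finset.mem_coe, Finset.mem_compl]
    tauto

variable [Fintype V] [DecidableRel G.Adj] {A B : Finset V} {m n : ℕ}

theorem excessSqSum_lt_or_iso_caterpillar_of_degree_eq_card (hG : G.IsTree)
    (hAB : G.IsBipartiteWith A B) (hm : 2 ≤ m) (hA : A.card = m + 3) (hB : B.card = n + 2) {u : V}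
    (hu : u ∈ A) (hdeg : G.degree u = B.card) :
    excessSqSum G < (n + 1) ^ 2 + (m ^ 2 + 2 ^ 2) ∨
      ∃ k ≤ 2, Nonempty (G ≃g caterpillar (m + 2 - k) n k) := by
  have : Nontrivial V := Set.nontrivial_of_nontrivial
    (Finset.one_lt_card_iff_nontrivial.mp (show 1 < A.card by omega))
  have hnbr : G.neighborFinset u = B :=
    Finset.eq_of_subset_of_card_le (isBipartiteWith_neighborFinset_subset hAB hu) hdeg.ge
  have hadj {v : V} (hv : v ∈ B) : G.Adj u v := by rwa [← mem_neighborFinset, hnbr]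
  have hsumA := sum_degree_sub_one_of_isBipartiteWith hG hAB
  have hsumB := sum_degree_sub_one_of_isBipartiteWith hG hAB.symm
  rcases sum_sq_lt_or_exists_add_eq (S := B) (e := fun v => G.degree v - 1) hm (by omega)
    (by omega) with hlt | ⟨x, hx, y, hy, hxy, hexy, hy2⟩
  · refine .inl ?_
    rw [excessSqSum, ← sum_add_sum_of_isTree hG hAB]
    refine add_lt_add_of_le_of_lt (sum_sq_le_sq_sum.trans_eq ?_) hlt
    rw [show ∑ v ∈ A, (G.degree v - 1) = n + 1 by omega]
  · refine .inr ⟨G.degree y - 1, hy2, ?_⟩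
    have hcard := card_add_card_of_isTree hG hAB
    have hposx := degree_pos_of_isTree hG x
    have hposy := degree_pos_of_isTree hG y
    rw [show m + 2 - (G.degree y - 1) = G.degree x - 1 by omega,
      show n = G.degree u - 2 by omega]
    exact nonempty_iso_caterpillar_of_isTree hG (hadj hx) (hadj hy) hxy (by omega)

theorem sum_degree_sub_one_sq_le_of_forall_degree_ne (hG : G.IsTree) (hAB : G.IsBipartiteWith A B)
    (hB : B.card = n + 3) (hdeg : ∀ v ∈ A, G.degree v ≠ B.card) :
    ∑ v ∈ A, (G.degree v - 1) ^ 2 ≤ (n + 1) ^ 2 + 1 ^ 2 := by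
  have : Nontrivial V := Set.nontrivial_of_nontrivial
    (Finset.one_lt_card_iff_nontrivial.mp (show 1 < B.card by omega))
  have hsum := sum_degree_sub_one_of_isBipartiteWith hG hAB
  refine sum_sq_le_of_forall_le (by omega) fun v hv => ?_
  have := isBipartiteWith_degree_le hAB hv
  have := hdeg v hv
  omega

theorem excessSqSum_lt_or_iso_caterpillar (hG : G.IsTree) (hAB : G.IsBipartiteWith A B)
    (hm : 2 ≤ m) (hmn : m < n) (hA : A.card = m + 3) (hB : B.card = n + 3) :
    excessSqSum G < (n + 2) ^ 2 + m ^ 2 + 2 ^ 2 ∨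
      (∃ k ≤ 2, Nonempty (G ≃g caterpillar (m + 2 - k) (n + 1) k)) ∨
      Nonempty (G ≃g caterpillar (n + 1) (m + 1) 1) := by
  have : Nontrivial V := Set.nontrivial_of_nontrivial
    (Finset.one_lt_card_iff_nontrivial.mp (show 1 < B.card by omega))
  by_cases hubA : ∃ u ∈ A, G.degree u = B.card
  · obtain ⟨u, hu, hdeg⟩ := hubA
    rcases excessSqSum_lt_or_iso_caterpillar_of_degree_eq_card hG hAB hm hA hB hu hdeg with h | h
    · exact .inl (h.trans_eq (add_assoc _ _ _).symm)
    · exact .inr (.inl h)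
  push Not at hubA
  have hsqA := sum_degree_sub_one_sq_le_of_forall_degree_ne hG hAB hB hubA
  have hsq : excessSqSum G = _ := (sum_add_sum_of_isTree hG hAB _).symm
  by_cases hubB : ∃ v ∈ B, G.degree v = A.card
  · obtain ⟨v, hv, hdeg⟩ := hubB
    rcases excessSqSum_lt_or_iso_caterpillar_of_degree_eq_card hG hAB.symm (by omega) hB hA hv
      hdeg with h | ⟨k, hk, ⟨e⟩⟩
    · exact .inl (by linarith)
    have hcat := (excessSqSum_eq_of_iso e).trans (excessSqSum_caterpillar _ _ _)
    interval_cases k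
    · have hsumB := sum_degree_sub_one_of_isBipartiteWith hG hAB.symm
      have hsqB := (sum_sq_le_sq_sum (S := B) (e := fun v => G.degree v - 1)).trans_eq
        (congrArg (· ^ 2) (show _ = m + 2 by omega))
      rw [Nat.sub_zero] at hcat
      linarith
    · exact .inr (.inr ⟨e⟩)
    · refine .inl ?_
      rw [hcat, Nat.add_sub_cancel]
      linarith
  · push Not at hubB
    have hsqB := sum_degree_sub_one_sq_le_of_forall_degree_ne hG hAB.symm hA hubB
    exact .inl (by linarith)

end BipartiteTrees

/-- For `4 ≤ p < q`, `n = p + q` and `2p > q + 4`, one has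
`B_{p,q}^{2,0} ≺_s D_{p,q}^{0,1} ≺_s B_{p,q}^{0,1} ≺_s B_{p,q}^{0,0}`, and every tree
`T ∈ 𝒯_n^{p,q}` isomorphic to none of these four trees satisfies
`T ≺_s B_{p,q}^{2,0}`: the last four trees in the S-order among `𝒯_n^{p,q}` are
`B_{p,q}^{2,0}, D_{p,q}^{0,1}, B_{p,q}^{0,1}, B_{p,q}^{0,0}`. -/
theorem stmt_11 (p q : ℕ) (hp : 4 ≤ p) (hpq : p < q) (h : q + 4 < 2 * p) :
    SLt (BTree p q 2 0) (DTree p q 0 1) ∧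
    SLt (DTree p q 0 1) (BTree p q 0 1) ∧
    SLt (BTree p q 0 1) (BTree p q 0 0) ∧
    ∀ T : SimpleGraph (Fin (p + q)), TreeBip p q T →
      ¬ Nonempty (T ≃g BTree p q 2 0) → ¬ Nonempty (T ≃g DTree p q 0 1) →
      ¬ Nonempty (T ≃g BTree p q 0 1) → ¬ Nonempty (T ≃g BTree p q 0 0) →
      SLt T (BTree p q 2 0) := by
  obtain ⟨m, rfl⟩ : ∃ m, p = m + 3 := ⟨p - 3, by omega⟩
  obtain ⟨n, rfl⟩ : ∃ n, q = n + 3 := ⟨q - 3, by omega⟩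
  obtain ⟨e₀₀⟩ := nonempty_iso_BTree_zero_caterpillar (m + 3) (n + 3) 0 (by omega) (by omega)
  obtain ⟨e₂₀⟩ := nonempty_iso_BTree_zero_caterpillar (m + 3) (n + 3) 2 (by omega) (by omega)
  obtain ⟨e₀₁⟩ := nonempty_iso_BTree_zero_one_caterpillar (m + 3) (n + 3) (by omega) (by omega)
  obtain ⟨d₀₁⟩ := nonempty_iso_DTree_zero_one_caterpillar (m + 3) (n + 3) (by omega) (by omega)
  have hV : 5 ≤ Fintype.card (Fin (m + 3 + (n + 3))) := by rw [Fintype.card_fin]; omega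
  refine ⟨sLt_of_iso_caterpillar hV e₂₀ d₀₁ ?_, sLt_of_iso_caterpillar hV d₀₁ e₀₁ ?_,
    sLt_of_iso_caterpillar hV e₀₁ e₀₀ ?_, fun T ⟨hT, A, hA, hTA⟩ hB₂₀ hD₀₁ hB₀₁ hB₀₀ => ?_⟩
  any_goals simp only [Nat.add_succ_sub_one, Nat.reduceSubDiff, Nat.sub_zero]; nlinarith
  classical
  rcases excessSqSum_lt_or_iso_caterpillar hT (isBipartiteWith_compl_of_forall_adj hTA)
    (m := m) (n := n) (by omega) (by omega) hA (by simp [Finset.card_compl, hA]) with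
    hlt | ⟨k, hk, ⟨e⟩⟩ | ⟨⟨e⟩⟩
  · refine sLt_of_excessSqSum_lt hV hT (e₂₀.isTree_iff.mpr (caterpillar_isTree _ _ _)) ?_
    rw [excessSqSum_eq_of_iso e₂₀, excessSqSum_caterpillar]
    exact hlt
  · interval_cases k
    exacts [(hB₀₀ ⟨e.trans e₀₀.symm⟩).elim, (hB₀₁ ⟨e.trans e₀₁.symm⟩).elim,
      (hB₂₀ ⟨e.trans e₂₀.symm⟩).elim]
  · exact (hD₀₁ ⟨e.trans d₀₁.symm⟩).elim
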